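/- arXiv:1711.01936 — 2 statements merged into one kernel-verified Lean document; each statement's English description precedes it below -/
import Mathlib

section
/- (Convergence of the PC-algorithm II with outer perturbations.) Let ν ∈ (0,1), μ ∈ [0, 1 − ν) and γ ∈ (0,2). Let {e1^k}, {e2^k} be sequences in H with Σ_{k=0}^∞ ‖e1^k‖ < +∞ and Σ_{k=0}^∞ ‖e2^k‖ < +∞. Let x^0 ∈ H and let {x^k}, {y^k}, {β_k} satisfy, for every k ≥ 0: β_k > 0 with inf_k β_k > 0; y^k = P_C(x^k − β_k F(x^k) + e1^k); β_k‖F(x^k) − F(y^k)‖ ≤ ν‖x^k − y^k‖; ‖e1^k‖ ≤ μ‖x^k − y^k‖; d^k := (x^k − y^k) − β_k(F(x^k) − F(y^k)) + e1^k ≠ 0; ρ_k := ⟨x^k − y^k, d^k⟩/‖d^k‖²; and x^{k+1} = P_C(x^k − γ ρ_k β_k F(y^k) + e2^k). Then {x^k} converges weakly (i.e., ⟨x^k, u⟩ → ⟨x̂, u⟩ for every u ∈ H) to some point x̂ ∈ SOL(C,F). -/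
open RealInnerProductSpace

/-!
Put `θ = ν + μ < 1`. The residual `d k` differs from `x k - y k` by at most `θ ‖x k - y k‖`, so
`ρ k ‖d k‖` is bounded below by a fixed multiple of `‖x k - y k‖`. Since `y k` is also the
projection of `y k + d k - β k F (y k)`, the two projection inequalities, tested at `x (k + 1)` and
at a solution `p`, combine with monotonicity into
`‖x (k+1) - p‖² ≤ ‖x k - p‖² - c ‖x k - y k‖² + 2 ‖e2 k‖ ‖x (k+1) - p‖`.
Summability of `e2` then makes `‖x k - p‖` converge for every solution `p` and forces
`x k - y k → 0`, hence `d k → 0`. As `(β k)⁻¹ d k → 0`, the points `y k` solve the variational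
inequality up to a vanishing error, so by Minty's lemma every weak cluster point is a solution, and
Opial's lemma gives weak convergence of the whole sequence.
-/

open Filter Topology Asymptotics

section RealSequences

theorem exists_tendsto_of_le_add_summable {a ε : ℕ → ℝ} (ha : BddBelow (Set.range a))
    (hε : Summable ε) (h : ∀ k, a (k + 1) ≤ a k + ε k) : ∃ l, Tendsto a atTop (𝓝 l) := by
  have hsum := hε.hasSum.tendsto_sum_nat
  have hanti : Antitone fun k ↦ a k - ∑ i ∈ Finset.range k, ε i := by
    refine antitone_nat_of_succ_le fun k ↦ ?_
    rw [Finset.sum_range_succ]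
    linarith [h k]
  have hbdd : BddBelow (Set.range fun k ↦ a k - ∑ i ∈ Finset.range k, ε i) := by
    obtain ⟨m, hm⟩ := ha
    obtain ⟨M, hM⟩ := hsum.bddAbove_range
    refine ⟨m - M, ?_⟩
    rintro _ ⟨k, rfl⟩
    exact sub_le_sub (hm ⟨k, rfl⟩) (hM ⟨k, rfl⟩)
  exact ⟨_, ((tendsto_atTop_ciInf hanti hbdd).add hsum).congr fun k ↦ sub_add_cancel _ _⟩

theorem le_add_two_mul_of_sq_le {a b ε : ℝ} (ha : 0 ≤ a) (hε : 0 ≤ ε)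
    (h : b ^ 2 ≤ a ^ 2 + 2 * (ε * b)) : b ≤ a + 2 * ε := by
  have hsq : (b - ε) ^ 2 ≤ (a + ε) ^ 2 := by nlinarith [mul_nonneg ha hε]
  linarith [le_of_abs_le (abs_le_of_sq_le_sq hsq (by positivity))]

theorem exists_tendsto_of_sq_le_add {a ε : ℕ → ℝ} (ha : ∀ k, 0 ≤ a k) (hε₀ : ∀ k, 0 ≤ ε k)
    (hε : Summable ε) (h : ∀ k, a (k + 1) ^ 2 ≤ a k ^ 2 + 2 * (ε k * a (k + 1))) :
    ∃ l, Tendsto a atTop (𝓝 l) :=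
  exists_tendsto_of_le_add_summable ⟨0, Set.forall_mem_range.2 ha⟩ (hε.mul_left 2)
    fun k ↦ le_add_two_mul_of_sq_le (ha k) (hε₀ k) (h k)

theorem tendsto_zero_of_sq_le_sub_add {a s ε : ℕ → ℝ} {l c : ℝ} (hc : 0 < c)
    (ha : Tendsto a atTop (𝓝 l)) (hε : Tendsto ε atTop (𝓝 0))
    (h : ∀ k, a (k + 1) ^ 2 ≤ a k ^ 2 - c * s k ^ 2 + 2 * (ε k * a (k + 1))) :
    Tendsto s atTop (𝓝 0) := by
  have ha' := (tendsto_add_atTop_iff_nat 1).2 ha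
  have hbound : Tendsto (fun k ↦ (a k ^ 2 - a (k + 1) ^ 2 + 2 * (ε k * a (k + 1))) / c)
      atTop (𝓝 0) := by
    simpa using (((ha.pow 2).sub (ha'.pow 2)).add ((hε.mul ha').const_mul 2)).div_const c
  have hsq : Tendsto (fun k ↦ s k ^ 2) atTop (𝓝 0) := by
    refine squeeze_zero (fun k ↦ sq_nonneg _) (fun k ↦ ?_) hbound
    rw [le_div_iff₀ hc]
    linarith [h k]
  rw [tendsto_zero_iff_abs_tendsto_zero]
  simpa [Real.sqrt_sq_eq_abs, Function.comp_def] using hsq.sqrt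

end RealSequences

section NormedGroups

variable {E ι : Type*} [SeminormedAddCommGroup E]

theorem isBigO_one_of_tendsto_norm_sub {l : Filter ι} {x : ι → E} {z : E} {a : ℝ}
    (h : Tendsto (fun i ↦ ‖x i - z‖) l (𝓝 a)) : x =O[l] fun _ ↦ (1 : ℝ) := by
  simpa using ((h.isBigO_one ℝ).of_norm_left).add (isBigO_const_const z one_ne_zero l)

theorem norm_le_one_add_mul_norm {r d : E} {θ : ℝ} (h : ‖d - r‖ ≤ θ * ‖r‖) :
    ‖d‖ ≤ (1 + θ) * ‖r‖ := by
  linarith [norm_le_norm_add_norm_sub' d r]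

theorem norm_sub_smul_add_sub_le [NormedSpace ℝ E] {r s e : E} {β ν μ : ℝ} (hβ : 0 ≤ β)
    (hs : β * ‖s‖ ≤ ν * ‖r‖) (he : ‖e‖ ≤ μ * ‖r‖) :
    ‖r - β • s + e - r‖ ≤ (ν + μ) * ‖r‖ := by
  calc ‖r - β • s + e - r‖ = ‖e - β • s‖ := by congr 1; abel
    _ ≤ ‖e‖ + ‖β • s‖ := norm_sub_le _ _
    _ ≤ (ν + μ) * ‖r‖ := by rw [norm_smul, Real.norm_of_nonneg hβ]; linarith

end NormedGroups

section WeakConvergence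

variable {H ι : Type*} [NormedAddCommGroup H] [InnerProductSpace ℝ H]
  {l : Filter ι} {x y : ι → H} {z : H}

/-- Weak convergence of a family of points of a Hilbert space along a filter; by the Riesz
representation theorem it suffices to test against inner products. -/
def TendstoWeakly (x : ι → H) (l : Filter ι) (z : H) : Prop :=
  ∀ u : H, Tendsto (fun i ↦ ⟪x i, u⟫) l (𝓝 ⟪z, u⟫)

theorem tendsto_inner_zero_of_isBigO_one (hx : Tendsto x l (𝓝 0))
    (hy : y =O[l] fun _ ↦ (1 : ℝ)) : Tendsto (fun i ↦ ⟪x i, y i⟫) l (𝓝 0) := by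
  have hmul : (fun i ↦ ‖x i‖ * ‖y i‖) =o[l] fun _ ↦ (1 : ℝ) := by
    simpa using ((isLittleO_one_iff ℝ).2 hx).norm_left.mul_isBigO hy.norm_left
  exact squeeze_zero_norm (fun i ↦ norm_inner_le_norm _ _) ((isLittleO_one_iff ℝ).1 hmul)

theorem TendstoWeakly.of_tendsto_sub (hx : TendstoWeakly x l z)
    (hxy : Tendsto (fun i ↦ x i - y i) l (𝓝 0)) : TendstoWeakly y l z := by
  intro u
  have hinner := tendsto_inner_zero_of_isBigO_one hxy (isBigO_const_const u one_ne_zero l)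
  simpa [inner_sub_left] using (hx u).sub hinner

theorem TendstoWeakly.mem_of_isClosed_of_convex [CompleteSpace H] [NeBot l] {C : Set H}
    (hx : TendstoWeakly x l z) (hCcv : Convex ℝ C) (hCcl : IsClosed C) (hxC : ∀ᶠ i in l, x i ∈ C) :
    z ∈ C := by
  by_contra hz
  obtain ⟨f, u, hfC, hfz⟩ := geometric_hahn_banach_closed_point hCcv hCcl hz
  have hf : Tendsto (fun i ↦ f (x i)) l (𝓝 (f z)) := by
    simpa only [real_inner_comm ((InnerProductSpace.toDual ℝ H).symm f),
      InnerProductSpace.toDual_symm_apply] using hx ((InnerProductSpace.toDual ℝ H).symm f)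
  exact hfz.not_ge (le_of_tendsto hf (hxC.mono fun i hi ↦ (hfC _ hi).le))

theorem exists_tendstoWeakly_of_isBigO_one [CompleteSpace H] {U : Ultrafilter ι}
    (hx : x =O[U] fun _ ↦ (1 : ℝ)) : ∃ z, TendstoWeakly x U z := by
  let g : ι → WeakDual ℝ H := fun i ↦ StrongDual.toWeakDual (InnerProductSpace.toDual ℝ H (x i))
  obtain ⟨R, hR⟩ := hx.bound
  have hball : (U.map g : Filter (WeakDual ℝ H)) ≤
      𝓟 (WeakDual.toStrongDual ⁻¹' Metric.closedBall (0 : StrongDual ℝ H) R) := by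
    rw [le_principal_iff]
    exact hR.mono fun i hi ↦ by simpa [g] using hi
  obtain ⟨f, -, hf⟩ := (WeakDual.isCompact_closedBall 0 R).ultrafilter_le_nhds _ hball
  refine ⟨(InnerProductSpace.toDual ℝ H).symm (WeakDual.toStrongDual f), fun u ↦ ?_⟩
  rw [InnerProductSpace.toDual_symm_apply]
  exact ((WeakDual.eval_continuous u).tendsto f).comp hf

theorem TendstoWeakly.eq_of_tendsto_norm_sub {l₁ l₂ : Filter ι} [NeBot l₁] [NeBot l₂]
    (hl₁ : l₁ ≤ l) (hl₂ : l₂ ≤ l) {w : H} {a b : ℝ} (hz : TendstoWeakly x l₁ z)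
    (hw : TendstoWeakly x l₂ w) (hza : Tendsto (fun i ↦ ‖x i - z‖) l (𝓝 a))
    (hwb : Tendsto (fun i ↦ ‖x i - w‖) l (𝓝 b)) : z = w := by
  -- `2 ⟪x i, w - z⟫ = ‖x i - z‖² - ‖x i - w‖² + ‖w‖² - ‖z‖²` has a limit along all of `l`.
  have hlim : Tendsto (fun i ↦ ⟪x i, w - z⟫) l
      (𝓝 ((a ^ 2 - b ^ 2 + (‖w‖ ^ 2 - ‖z‖ ^ 2)) / 2)) := by
    refine ((((hza.pow 2).sub (hwb.pow 2)).add_const _).div_const 2).congr fun i ↦ ?_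
    rw [norm_sub_sq_real, norm_sub_sq_real, inner_sub_right]
    ring
  have hinner : ⟪w - z, w - z⟫ = 0 := by
    rw [inner_sub_left, tendsto_nhds_unique (hz _) (hlim.mono_left hl₁),
      tendsto_nhds_unique (hw _) (hlim.mono_left hl₂), sub_self]
  exact (sub_eq_zero.1 (inner_self_eq_zero.1 hinner)).symm

/-- Opial's lemma. -/
theorem exists_tendstoWeakly_of_forall_tendsto_norm_sub [CompleteSpace H] [NeBot l] {S : Set H}
    (hS : S.Nonempty) (hnorm : ∀ p ∈ S, ∃ a, Tendsto (fun i ↦ ‖x i - p‖) l (𝓝 a))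
    (hcluster : ∀ U : Ultrafilter ι, ↑U ≤ l → ∀ z, TendstoWeakly x U z → z ∈ S) :
    ∃ z ∈ S, TendstoWeakly x l z := by
  have hbdd : x =O[l] fun _ ↦ (1 : ℝ) := by
    obtain ⟨p, hp⟩ := hS
    obtain ⟨a, ha⟩ := hnorm p hp
    exact isBigO_one_of_tendsto_norm_sub ha
  have hlim : ∀ U : Ultrafilter ι, ↑U ≤ l → ∃ z ∈ S, TendstoWeakly x U z := fun U hU ↦ by
    obtain ⟨z, hz⟩ := exists_tendstoWeakly_of_isBigO_one (hbdd.mono hU)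
    exact ⟨z, hcluster U hU z hz, hz⟩
  obtain ⟨z, hzS, hz⟩ := hlim (.of l) (Ultrafilter.of_le l)
  refine ⟨z, hzS, fun u ↦ (tendsto_iff_ultrafilter _ _ _).2 fun U hU ↦ ?_⟩
  obtain ⟨w, hwS, hw⟩ := hlim U hU
  obtain ⟨a, ha⟩ := hnorm z hzS
  obtain ⟨b, hb⟩ := hnorm w hwS
  obtain rfl := hz.eq_of_tendsto_norm_sub (Ultrafilter.of_le l) hU hw ha hb
  exact hw u

end WeakConvergence

section VariationalInequality

variable {H ι : Type*} [NormedAddCommGroup H] [InnerProductSpace ℝ H]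
  {C : Set H} {F : H → H} {z : H}

/-- The solution set `SOL(C, F)` of the variational inequality. -/
def viSol (C : Set H) (F : H → H) : Set H :=
  {p | p ∈ C ∧ ∀ z ∈ C, 0 ≤ ⟪F p, z - p⟫}

theorem inner_nonneg_of_mem_viSol (hF : ∀ u ∈ C, ∀ v ∈ C, 0 ≤ ⟪F u - F v, u - v⟫)
    {p c : H} (hp : p ∈ viSol C F) (hc : c ∈ C) : 0 ≤ ⟪F c, c - p⟫ := by
  have h := hF c hc p hp.1
  rw [inner_sub_left] at h
  linarith [hp.2 c hc]

/-- Minty's lemma. -/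
theorem mem_viSol_of_forall_inner_nonneg (hCcv : Convex ℝ C) (hF : ContinuousOn F C) (hz : z ∈ C)
    (h : ∀ c ∈ C, 0 ≤ ⟪F c, c - z⟫) : z ∈ viSol C F := by
  refine ⟨hz, fun c hc ↦ ?_⟩
  have hseg : ∀ t ∈ Set.Icc (0 : ℝ) 1, z + t • (c - z) ∈ C := fun t ht ↦
    hCcv.add_smul_sub_mem hz hc ht
  have hcont : ContinuousOn (fun t : ℝ ↦ ⟪F (z + t • (c - z)), c - z⟫) (Set.Icc 0 1) :=
    ContinuousOn.inner (𝕜 := ℝ) (hF.comp (by fun_prop) hseg) continuousOn_const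
  have hlim : Tendsto (fun t : ℝ ↦ ⟪F (z + t • (c - z)), c - z⟫) (𝓝[>] 0) (𝓝 ⟪F z, c - z⟫) := by
    have h₀ := (hcont 0 (Set.left_mem_Icc.2 zero_le_one)).tendsto
    simp only [zero_smul, add_zero] at h₀
    exact h₀.mono_left (nhdsWithin_le_of_mem (Icc_mem_nhdsGT zero_lt_one))
  refine ge_of_tendsto hlim ?_
  filter_upwards [Ioc_mem_nhdsGT (zero_lt_one (α := ℝ))] with t ht
  have hpos := h _ (hseg t ⟨ht.1.le, ht.2⟩)
  rw [add_sub_cancel_left, real_inner_smul_right] at hpos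
  exact nonneg_of_mul_nonneg_right hpos ht.1

theorem mem_viSol_of_tendstoWeakly [CompleteSpace H] (hCcv : Convex ℝ C) (hCcl : IsClosed C)
    (hF : ∀ u ∈ C, ∀ v ∈ C, 0 ≤ ⟪F u - F v, u - v⟫) (hFc : ContinuousOn F C)
    {l : Filter ι} [NeBot l] {y w : ι → H} (hyC : ∀ i, y i ∈ C) (hy : TendstoWeakly y l z)
    (hybdd : y =O[l] fun _ ↦ (1 : ℝ)) (hw : Tendsto w l (𝓝 0))
    (h : ∀ i, ∀ c ∈ C, ⟪w i, c - y i⟫ ≤ ⟪F (y i), c - y i⟫) : z ∈ viSol C F := by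
  have hzC := hy.mem_of_isClosed_of_convex hCcv hCcl (.of_forall hyC)
  refine mem_viSol_of_forall_inner_nonneg hCcv hFc hzC fun c hc ↦ ?_
  have herr : Tendsto (fun i ↦ ⟪w i, c - y i⟫) l (𝓝 0) :=
    tendsto_inner_zero_of_isBigO_one hw ((isBigO_const_const c one_ne_zero l).sub hybdd)
  have hlim : Tendsto (fun i ↦ ⟪F c, c - y i⟫) l (𝓝 ⟪F c, c - z⟫) := by
    simpa only [inner_sub_right, real_inner_comm] using (hy (F c)).const_sub ⟪F c, c⟫
  refine le_of_tendsto_of_tendsto' herr hlim fun i ↦ (h i c hc).trans ?_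
  have hmono := hF c hc (y i) (hyC i)
  rwa [inner_sub_left, sub_nonneg] at hmono

end VariationalInequality

section ProjectionContraction

variable {H ι : Type*} [NormedAddCommGroup H] [InnerProductSpace ℝ H]
  {C : Set H}

/-- `v` is the metric projection `P_C u`, encoded by its variational characterization, which for
convex `C` is equivalent to `v` being the nearest point of `C` to `u`. -/
def IsMetricProj (C : Set H) (u v : H) : Prop :=
  v ∈ C ∧ ∀ c ∈ C, ⟪u - v, c - v⟫ ≤ 0

theorem IsMetricProj.norm_sub_sq_le {x g e x' p : H} (h : IsMetricProj C (x - g + e) x')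
    (hp : p ∈ C) :
    ‖x' - p‖ ^ 2 ≤ ‖x - p‖ ^ 2 - ‖x - x'‖ ^ 2 - 2 * ⟪g, x' - p⟫ + 2 * (‖e‖ * ‖x' - p‖) := by
  have hexpand : ‖x - p‖ ^ 2 = ‖x - x'‖ ^ 2 + 2 * ⟪x - x', x' - p⟫ + ‖x' - p‖ ^ 2 := by
    rw [← norm_add_sq_real, sub_add_sub_cancel]
  have hproj : ⟪g, x' - p⟫ - ⟪e, x' - p⟫ ≤ ⟪x - x', x' - p⟫ := by
    have hp' := h.2 p hp
    rw [← neg_sub x' p, inner_neg_right, show x - g + e - x' = x - x' - g + e by abel,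
      inner_add_left, inner_sub_left] at hp'
    linarith
  linarith [real_inner_le_norm e (x' - p)]

theorem IsMetricProj.inner_le_mul_inner {y d v x' p : H} {β : ℝ}
    (h : IsMetricProj C (y + d - β • v) y) (hβ : 0 ≤ β) (hx' : x' ∈ C) (hp : 0 ≤ ⟪v, y - p⟫) :
    ⟪d, x' - y⟫ ≤ β * ⟪v, x' - p⟫ := by
  have hproj := h.2 x' hx'
  rw [show y + d - β • v - y = d - β • v by abel, inner_sub_left, real_inner_smul_left] at hproj
  rw [← sub_add_sub_cancel x' y p, inner_add_right, mul_add]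
  linarith [mul_nonneg hβ hp]

theorem norm_sub_sq_le_of_pc_step {x y d v e x' p : H} {β ρ γ : ℝ} (hβ : 0 ≤ β) (hρ : 0 ≤ ρ)
    (hγ : 0 ≤ γ) (hy : IsMetricProj C (y + d - β • v) y)
    (hx' : IsMetricProj C (x - (γ * ρ * β) • v + e) x') (hρd : ρ * ‖d‖ ^ 2 = ⟪x - y, d⟫)
    (hpC : p ∈ C) (hp : 0 ≤ ⟪v, y - p⟫) :
    ‖x' - p‖ ^ 2 ≤
      ‖x - p‖ ^ 2 - γ * (2 - γ) * (ρ * ‖d‖) ^ 2 + 2 * (‖e‖ * ‖x' - p‖) := by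
  have hproj := hx'.norm_sub_sq_le hpC
  rw [real_inner_smul_left] at hproj
  have hcorr := mul_le_mul_of_nonneg_left (hy.inner_le_mul_inner hβ hx'.1 hp) (mul_nonneg hγ hρ)
  have hsplit : ⟪d, x' - y⟫ = ρ * ‖d‖ ^ 2 - ⟪x - x', d⟫ := by
    rw [hρd, ← inner_sub_left, sub_sub_sub_cancel_left, real_inner_comm]
  have hsquare : 0 ≤ ‖x - x'‖ ^ 2 - 2 * (γ * ρ * ⟪x - x', d⟫) + (γ * ρ * ‖d‖) ^ 2 := by
    have h := sq_nonneg ‖x - x' - (γ * ρ) • d‖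
    rwa [norm_sub_sq_real, real_inner_smul_right, norm_smul, mul_pow, Real.norm_eq_abs, sq_abs,
      ← mul_pow] at h
  rw [hsplit] at hcorr
  linarith

section RelativeError

variable {r d : H} {θ : ℝ}

theorem one_sub_mul_norm_sq_le_inner (h : ‖d - r‖ ≤ θ * ‖r‖) :
    (1 - θ) * ‖r‖ ^ 2 ≤ ⟪r, d⟫ := by
  have herr : -(‖r‖ * ‖d - r‖) ≤ ⟪r, d - r⟫ := neg_le_of_abs_le (abs_real_inner_le_norm _ _)
  rw [inner_sub_right, real_inner_self_eq_norm_sq] at herr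
  linarith [mul_le_mul_of_nonneg_left h (norm_nonneg r)]

theorem div_mul_norm_le_inner_div_norm (h : ‖d - r‖ ≤ θ * ‖r‖) (hθ : θ ≤ 1) (hd : d ≠ 0) :
    (1 - θ) / (1 + θ) * ‖r‖ ≤ ⟪r, d⟫ / ‖d‖ := by
  have hd₀ : 0 < ‖d‖ := norm_pos_iff.2 hd
  have hdr := norm_le_one_add_mul_norm h
  have hθ' : 0 < 1 + θ := pos_of_mul_pos_left (hd₀.trans_le hdr) (norm_nonneg r)
  rw [le_div_iff₀ hd₀]
  calc (1 - θ) / (1 + θ) * ‖r‖ * ‖d‖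
      ≤ (1 - θ) / (1 + θ) * ‖r‖ * ((1 + θ) * ‖r‖) := by
        have : 0 ≤ 1 - θ := sub_nonneg.2 hθ
        gcongr
    _ = (1 - θ) * ‖r‖ ^ 2 := by field_simp
    _ ≤ ⟪r, d⟫ := one_sub_mul_norm_sq_le_inner h

end RelativeError

theorem norm_sub_sq_le_of_pc_step_of_relative_error {x y d v e x' p : H} {β ρ γ θ : ℝ}
    (hβ : 0 ≤ β) (hγ : γ ∈ Set.Ioo (0 : ℝ) 2) (hθ : θ ∈ Set.Ico (0 : ℝ) 1) (hd : d ≠ 0)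
    (hdxy : ‖d - (x - y)‖ ≤ θ * ‖x - y‖) (hρ : ρ = ⟪x - y, d⟫ / ‖d‖ ^ 2)
    (hy : IsMetricProj C (y + d - β • v) y)
    (hx' : IsMetricProj C (x - (γ * ρ * β) • v + e) x') (hpC : p ∈ C) (hp : 0 ≤ ⟪v, y - p⟫) :
    ‖x' - p‖ ^ 2 ≤ ‖x - p‖ ^ 2 - γ * (2 - γ) * ((1 - θ) / (1 + θ)) ^ 2 * ‖x - y‖ ^ 2
      + 2 * (‖e‖ * ‖x' - p‖) := by
  have hθ₁ : 0 ≤ 1 - θ := sub_nonneg.2 hθ.2.le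
  have hθ₂ : 0 ≤ 1 + θ := add_nonneg zero_le_one hθ.1
  have hγ₂ : 0 ≤ γ * (2 - γ) := mul_nonneg hγ.1.le (sub_nonneg.2 hγ.2.le)
  have hd₀ : ‖d‖ ≠ 0 := norm_ne_zero_iff.2 hd
  have hρ₀ : 0 ≤ ρ := by
    rw [hρ]
    have := one_sub_mul_norm_sq_le_inner hdxy
    exact div_nonneg (le_trans (by positivity) this) (sq_nonneg _)
  have hρd : ρ * ‖d‖ = ⟪x - y, d⟫ / ‖d‖ := by rw [hρ]; field_simp
  have hstep : (1 - θ) / (1 + θ) * ‖x - y‖ ≤ ρ * ‖d‖ :=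
    hρd ▸ div_mul_norm_le_inner_div_norm hdxy hθ.2.le hd
  have hdescent := norm_sub_sq_le_of_pc_step hβ hρ₀ hγ.1.le hy hx'
    (by rw [hρ]; field_simp) hpC hp
  have hsq := mul_le_mul_of_nonneg_left (pow_le_pow_left₀ (by positivity) hstep 2) hγ₂
  rw [mul_pow] at hsq
  linarith

theorem mem_viSol_of_tendstoWeakly_of_residual [CompleteSpace H] {F : H → H} (hCcv : Convex ℝ C)
    (hCcl : IsClosed C) (hF : ∀ u ∈ C, ∀ v ∈ C, 0 ≤ ⟪F u - F v, u - v⟫) (hFc : ContinuousOn F C)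
    {l : Filter ι} [NeBot l] {y d : ι → H} {β : ι → ℝ} {b : ℝ} (hb : 0 < b) (hβ : ∀ i, b ≤ β i)
    (hproj : ∀ i, IsMetricProj C (y i + d i - β i • F (y i)) (y i)) (hd : Tendsto d l (𝓝 0))
    (hybdd : y =O[l] fun _ ↦ (1 : ℝ)) {z : H} (hy : TendstoWeakly y l z) : z ∈ viSol C F := by
  have hw : Tendsto (fun i ↦ (β i)⁻¹ • d i) l (𝓝 0) := by
    refine squeeze_zero_norm (fun i ↦ ?_) (by simpa using hd.norm.const_mul b⁻¹)
    rw [norm_smul, norm_inv, Real.norm_of_nonneg (hb.le.trans (hβ i))]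
    gcongr
    exact hβ i
  refine mem_viSol_of_tendstoWeakly hCcv hCcl hF hFc (fun i ↦ (hproj i).1) hy hybdd hw
    fun i c hc ↦ ?_
  rw [real_inner_smul_left, inv_mul_le_iff₀ (hb.trans_le (hβ i))]
  exact (hproj i).inner_le_mul_inner (hb.le.trans (hβ i)) hc (by simp)

end ProjectionContraction

theorem stmt_7_general {H : Type*} [NormedAddCommGroup H] [InnerProductSpace ℝ H]
    [CompleteSpace H] {C : Set H} (hCcl : IsClosed C) (hCcv : Convex ℝ C) {F : H → H}
    (hmono : ∀ u ∈ C, ∀ v ∈ C, 0 ≤ ⟪F u - F v, u - v⟫) (hcont : ContinuousOn F C)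
    (hSOL : (viSol C F).Nonempty) {ν μ γ : ℝ} (hν : 0 ≤ ν) (hμ : μ ∈ Set.Ico (0 : ℝ) (1 - ν))
    (hγ : γ ∈ Set.Ioo (0 : ℝ) 2) {e1 e2 : ℕ → H} (he2 : Summable (fun k ↦ ‖e2 k‖))
    {x y : ℕ → H} {β : ℕ → ℝ} {d : ℕ → H} {ρ : ℕ → ℝ} {b : ℝ} (hb : 0 < b) (hβ : ∀ k, b ≤ β k)
    (hy : ∀ k, IsMetricProj C (x k - β k • F (x k) + e1 k) (y k))
    (hstep : ∀ k, β k * ‖F (x k) - F (y k)‖ ≤ ν * ‖x k - y k‖)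
    (he1b : ∀ k, ‖e1 k‖ ≤ μ * ‖x k - y k‖)
    (hd : ∀ k, d k = (x k - y k) - β k • (F (x k) - F (y k)) + e1 k)
    (hdne : ∀ k, d k ≠ 0)
    (hρ : ∀ k, ρ k = ⟪x k - y k, d k⟫ / ‖d k‖ ^ 2)
    (hx : ∀ k, IsMetricProj C (x k - (γ * ρ k * β k) • F (y k) + e2 k) (x (k + 1))) :
    ∃ xhat ∈ viSol C F, TendstoWeakly x atTop xhat := by
  have hβ₀ : ∀ k, 0 ≤ β k := fun k ↦ hb.le.trans (hβ k)
  have hθ : ν + μ ∈ Set.Ico (0 : ℝ) 1 := ⟨add_nonneg hν hμ.1, by linarith [hμ.2]⟩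
  have hproj : ∀ k, IsMetricProj C (y k + d k - β k • F (y k)) (y k) := fun k ↦ by
    convert hy k using 1
    rw [hd k, smul_sub]
    abel
  have hdxy : ∀ k, ‖d k - (x k - y k)‖ ≤ (ν + μ) * ‖x k - y k‖ := fun k ↦
    hd k ▸ norm_sub_smul_add_sub_le (hβ₀ k) (hstep k) (he1b k)
  set c := γ * (2 - γ) * ((1 - (ν + μ)) / (1 + (ν + μ))) ^ 2
  have hc : 0 < c := mul_pos (mul_pos hγ.1 (sub_pos.2 hγ.2))
    (pow_pos (div_pos (sub_pos.2 hθ.2) (by linarith [hθ.1])) 2)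
  have hdescent : ∀ p ∈ viSol C F, ∀ k, ‖x (k + 1) - p‖ ^ 2 ≤
      ‖x k - p‖ ^ 2 - c * ‖x k - y k‖ ^ 2 + 2 * (‖e2 k‖ * ‖x (k + 1) - p‖) := fun p hp k ↦
    norm_sub_sq_le_of_pc_step_of_relative_error (hβ₀ k) hγ hθ (hdne k) (hdxy k) (hρ k) (hproj k)
      (hx k) hp.1 (inner_nonneg_of_mem_viSol hmono hp (hproj k).1)
  have hnorm : ∀ p ∈ viSol C F, ∃ a, Tendsto (fun k ↦ ‖x k - p‖) atTop (𝓝 a) := fun p hp ↦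
    exists_tendsto_of_sq_le_add (fun k ↦ norm_nonneg _) (fun k ↦ norm_nonneg _) he2 fun k ↦ by
      linarith [hdescent p hp k, mul_nonneg hc.le (sq_nonneg ‖x k - y k‖)]
  obtain ⟨p, hp⟩ := hSOL
  obtain ⟨a, ha⟩ := hnorm p hp
  have hxy : Tendsto (fun k ↦ x k - y k) atTop (𝓝 0) := tendsto_zero_iff_norm_tendsto_zero.2 <|
    tendsto_zero_of_sq_le_sub_add hc ha he2.tendsto_atTop_zero (hdescent p hp)
  have hd₀ : Tendsto d atTop (𝓝 0) :=
    squeeze_zero_norm (fun k ↦ norm_le_one_add_mul_norm (hdxy k))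
      (by simpa using hxy.norm.const_mul (1 + (ν + μ)))
  have hybdd : y =O[atTop] fun _ ↦ (1 : ℝ) := by
    simpa using (isBigO_one_of_tendsto_norm_sub ha).sub (hxy.isBigO_one ℝ)
  exact exists_tendstoWeakly_of_forall_tendsto_norm_sub ⟨p, hp⟩ hnorm fun U hU z hz ↦
    mem_viSol_of_tendstoWeakly_of_residual hCcv hCcl hmono hcont hb hβ hproj (hd₀.mono_left hU)
      (hybdd.mono hU) (hz.of_tendsto_sub (hxy.mono_left hU))

theorem stmt_7 {H : Type*} [NormedAddCommGroup H] [InnerProductSpace ℝ H]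
    [CompleteSpace H]
    (C : Set H) (hCne : C.Nonempty) (hCcl : IsClosed C) (hCcv : Convex ℝ C)
    (P : H → H) (hPmem : ∀ u : H, P u ∈ C)
    (hPchar : ∀ u : H, ∀ c ∈ C, ⟪u - P u, c - P u⟫ ≤ 0)
    (F : H → H) (hmono : ∀ u v : H, 0 ≤ ⟪F u - F v, u - v⟫)
    (L : ℝ) (hL : 0 < L) (hLip : ∀ u v : H, ‖F u - F v‖ ≤ L * ‖u - v‖)
    (hSOL : ∃ p ∈ C, ∀ z ∈ C, 0 ≤ ⟪F p, z - p⟫)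
    (ν μ γ : ℝ) (hν : ν ∈ Set.Ioo (0 : ℝ) 1) (hμ : μ ∈ Set.Ico (0 : ℝ) (1 - ν))
    (hγ : γ ∈ Set.Ioo (0 : ℝ) 2)
    (e1 e2 : ℕ → H)
    (he1 : Summable (fun k => ‖e1 k‖)) (he2 : Summable (fun k => ‖e2 k‖))
    (x y : ℕ → H) (β : ℕ → ℝ) (d : ℕ → H) (ρ : ℕ → ℝ)
    (hβpos : ∀ k, 0 < β k) (hβinf : ∃ b > (0 : ℝ), ∀ k, b ≤ β k)
    (hy : ∀ k, y k = P (x k - β k • F (x k) + e1 k))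
    (hstep : ∀ k, β k * ‖F (x k) - F (y k)‖ ≤ ν * ‖x k - y k‖)
    (he1b : ∀ k, ‖e1 k‖ ≤ μ * ‖x k - y k‖)
    (hd : ∀ k, d k = (x k - y k) - β k • (F (x k) - F (y k)) + e1 k)
    (hdne : ∀ k, d k ≠ 0)
    (hρ : ∀ k, ρ k = ⟪x k - y k, d k⟫ / ‖d k‖ ^ 2)
    (hx : ∀ k, x (k + 1) = P (x k - (γ * ρ k * β k) • F (y k) + e2 k)) :
    ∃ xhat, (xhat ∈ C ∧ ∀ z ∈ C, 0 ≤ ⟪F xhat, z - xhat⟫) ∧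
      ∀ u : H, Filter.Tendsto (fun k => ⟪x k, u⟫) Filter.atTop (nhds ⟪xhat, u⟫) := by
  obtain ⟨b, hb, hβ⟩ := hβinf
  have hcont : Continuous F := (LipschitzWith.of_dist_le' fun u v ↦ by
    simpa only [dist_eq_norm] using hLip u v).continuous
  have hproj : ∀ u, IsMetricProj C u (P u) := fun u ↦ ⟨hPmem u, hPchar u⟩
  obtain ⟨xhat, hsol, hlim⟩ := stmt_7_general hCcl hCcv (fun u _ v _ ↦ hmono u v)
    hcont.continuousOn hSOL hν.1.le hμ hγ he2 hb hβ (fun k ↦ hy k ▸ hproj _) hstep he1b hd hdne hρ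
    fun k ↦ hx k ▸ hproj _
  exact ⟨xhat, hsol, hlim⟩
end

section
/- (One-step Fejér contraction of the PC-algorithm II step.) Let ν ∈ (0,1), γ ∈ (0,2), w ∈ H and x* ∈ SOL(C,F). Let β > 0 be such that β‖F(w) − F(y)‖ ≤ ν‖w − y‖, where y := P_C(w − β F(w)). Define d := (w − y) − β(F(w) − F(y)) and assume d ≠ 0; set ρ := ⟨w − y, d⟩/‖d‖² and x⁺ := P_C(w − γ ρ β F(y)). Then ‖x⁺ − x*‖² ≤ ‖w − x*‖² − γ(2 − γ)·ρ²·‖d‖². -/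
open RealInnerProductSpace

/-!
Write `x` for the solution `x*` and `p` for the new iterate `x⁺`. The Minty inequality
`0 ≤ ⟪F y, y - x⟫` and the projection inequality for `y` combine to
`β ⟪F y, x - p⟫ ≤ ⟪d, y - p⟫`. Inserting it, with weight `t = γρ ≥ 0`, into the
projection inequality for `p` and completing the square in `w - p` gives
`‖p - x‖² ≤ ‖w - x‖² + t² ‖d‖² - 2 t ⟪w - y, d⟫`. The right-hand side is minimal at
`t = ⟪w - y, d⟫ / ‖d‖² = ρ`, and `γ` is the relaxation factor around this optimal step.
-/

section

variable {H : Type*} [SeminormedAddCommGroup H] [InnerProductSpace ℝ H]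

theorem two_mul_mul_inner_le_sq_mul_norm_sq_add_norm_sq (t : ℝ) (u v : H) :
    2 * t * ⟪u, v⟫ ≤ t ^ 2 * ‖u‖ ^ 2 + ‖v‖ ^ 2 := by
  have hsq : ‖t • u - v‖ ^ 2 = t ^ 2 * ‖u‖ ^ 2 - 2 * (t * ⟪u, v⟫) + ‖v‖ ^ 2 := by
    rw [norm_sub_sq_real, real_inner_smul_left, norm_smul, mul_pow, Real.norm_eq_abs, sq_abs]
  linarith [sq_nonneg ‖t • u - v‖]

theorem inner_self_sub_nonneg_of_norm_le {u v : H} (h : ‖v‖ ≤ ‖u‖) : 0 ≤ ⟪u, u - v⟫ := by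
  have huv : ⟪u, v⟫ ≤ ‖u‖ * ‖u‖ :=
    (real_inner_le_norm u v).trans (mul_le_mul_of_nonneg_left h (norm_nonneg u))
  rw [inner_sub_right, real_inner_self_eq_norm_mul_norm]
  exact sub_nonneg.mpr huv

/-- `p` is a projection of `u` onto `C`, in the variational sense. For convex `C` this is
equivalent to `p` being a point of `C` nearest to `u`; for general `C` it is stronger. -/
structure IsProjOn (C : Set H) (u p : H) : Prop where
  mem : p ∈ C
  inner_nonpos : ∀ c ∈ C, ⟪u - p, c - p⟫ ≤ 0

/-- `x` solves the (Stampacchia) variational inequality of `F` over `C`, that is,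
`x ∈ SOL(C, F)`. -/
structure IsVISolution (C : Set H) (F : H → H) (x : H) : Prop where
  mem : x ∈ C
  inner_nonneg : ∀ z ∈ C, 0 ≤ ⟪F x, z - x⟫

/-- `x` solves the Minty (dual) variational inequality of `F` over `C`, in which the operator is
evaluated at the test point `z` instead of at `x`. -/
structure IsMintySolution (C : Set H) (F : H → H) (x : H) : Prop where
  mem : x ∈ C
  inner_nonneg : ∀ z ∈ C, 0 ≤ ⟪F z, z - x⟫

/-- The search direction `d` of the projection and contraction method at the iterate `w` with
predictor `y` and step size `β`. -/
def pcDirection (F : H → H) (β : ℝ) (w y : H) : H :=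
  (w - y) - β • (F w - F y)

variable {C : Set H} {F : H → H} {β t : ℝ} {w x y p : H}

theorem IsVISolution.isMintySolution
    (hmono : ∀ u ∈ C, ∀ v ∈ C, 0 ≤ ⟪F u - F v, u - v⟫) (hx : IsVISolution C F x) :
    IsMintySolution C F x where
  mem := hx.mem
  inner_nonneg z hz := by
    have hzx := hmono z hz x hx.mem
    rw [inner_sub_left] at hzx
    linarith [hx.inner_nonneg z hz]

theorem IsProjOn.norm_sub_sq_add_norm_sub_sq_le {u c : H} (hp : IsProjOn C u p) (hc : c ∈ C) :
    ‖u - p‖ ^ 2 + ‖p - c‖ ^ 2 ≤ ‖u - c‖ ^ 2 := by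
  have hexpand := norm_sub_sq_real (u - p) (c - p)
  rw [sub_sub_sub_cancel_right, norm_sub_rev c p] at hexpand
  linarith [hp.inner_nonpos c hc]

theorem IsProjOn.norm_sub_sq_le_of_sub_smul {g c : H} (hp : IsProjOn C (w - t • g) p)
    (hc : c ∈ C) :
    ‖p - c‖ ^ 2 ≤ ‖w - c‖ ^ 2 - ‖w - p‖ ^ 2 + 2 * t * ⟪g, c - p⟫ := by
  have hexpand (z : H) :
      ‖w - t • g - z‖ ^ 2 = ‖w - z‖ ^ 2 - 2 * (t * ⟪g, w - z⟫) + ‖t • g‖ ^ 2 := by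
    rw [sub_right_comm, norm_sub_sq_real, real_inner_smul_right, real_inner_comm]
  have hsplit : ⟪g, c - p⟫ = ⟪g, w - p⟫ - ⟪g, w - c⟫ := by
    rw [← inner_sub_right, sub_sub_sub_cancel_left]
  have hproj := hp.norm_sub_sq_add_norm_sub_sq_le hc
  rw [hexpand p, hexpand c] at hproj
  rw [hsplit]
  linarith

theorem IsMintySolution.mul_inner_sub_le_inner_pcDirection (hx : IsMintySolution C F x)
    (hβ : 0 ≤ β) (hy : IsProjOn C (w - β • F w) y) (hp : p ∈ C) :
    β * ⟪F y, x - p⟫ ≤ ⟪pcDirection F β w y, y - p⟫ := by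
  have hminty : 0 ≤ β * ⟪F y, y - x⟫ := mul_nonneg hβ (hx.inner_nonneg y hy.mem)
  have hresidual : w - β • F w - y = pcDirection F β w y - β • F y := by
    rw [pcDirection, smul_sub]
    abel
  have hproj := hy.inner_nonpos p hp
  rw [hresidual, inner_sub_left, real_inner_smul_left] at hproj
  simp only [inner_sub_right] at hminty hproj ⊢
  linarith

theorem inner_pcDirection_nonneg (hβ : 0 ≤ β) (hstep : β * ‖F w - F y‖ ≤ ‖w - y‖) :
    0 ≤ ⟪w - y, pcDirection F β w y⟫ := by
  apply inner_self_sub_nonneg_of_norm_le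
  rwa [norm_smul_of_nonneg hβ]

theorem IsMintySolution.norm_sub_sq_le_of_isProjOn (hx : IsMintySolution C F x)
    (hβ : 0 ≤ β) (hy : IsProjOn C (w - β • F w) y)
    (ht : 0 ≤ t) (hp : IsProjOn C (w - (t * β) • F y) p) :
    ‖p - x‖ ^ 2 ≤ ‖w - x‖ ^ 2 + t ^ 2 * ‖pcDirection F β w y‖ ^ 2
      - 2 * t * ⟪w - y, pcDirection F β w y⟫ := by
  set d := pcDirection F β w y
  have hcorrector := hp.norm_sub_sq_le_of_sub_smul hx.mem
  have hpredictor : t * (β * ⟪F y, x - p⟫) ≤ t * (⟪d, w - p⟫ - ⟪w - y, d⟫) := by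
    rw [real_inner_comm d (w - y), ← inner_sub_right, sub_sub_sub_cancel_left]
    exact mul_le_mul_of_nonneg_left
      (hx.mul_inner_sub_le_inner_pcDirection hβ hy hp.mem) ht
  have hsquare := two_mul_mul_inner_le_sq_mul_norm_sq_add_norm_sq t d (w - p)
  linarith

theorem stmt_19_general (hx : IsMintySolution C F x)
    (hβ : 0 ≤ β) (hy : IsProjOn C (w - β • F w) y) (hstep : β * ‖F w - F y‖ ≤ ‖w - y‖)
    {d : H} (hd : d = pcDirection F β w y) (hdne : ‖d‖ ≠ 0)
    {ρ : ℝ} (hρ : ρ = ⟪w - y, d⟫ / ‖d‖ ^ 2) {γ : ℝ} (hγ : 0 ≤ γ)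
    (hp : IsProjOn C (w - (γ * ρ * β) • F y) p) :
    ‖p - x‖ ^ 2 ≤ ‖w - x‖ ^ 2 - γ * (2 - γ) * ρ ^ 2 * ‖d‖ ^ 2 := by
  have hinner : ⟪w - y, d⟫ = ρ * ‖d‖ ^ 2 := by
    rw [hρ, div_mul_cancel₀ _ (pow_ne_zero 2 hdne)]
  have hρ_nonneg : 0 ≤ ρ := by
    rw [hρ, hd]
    exact div_nonneg (inner_pcDirection_nonneg hβ hstep) (sq_nonneg _)
  have hcontract := hx.norm_sub_sq_le_of_isProjOn hβ hy (mul_nonneg hγ hρ_nonneg) hp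
  rw [← hd, hinner] at hcontract
  linarith

end

theorem stmt_19 {H : Type*} [NormedAddCommGroup H] [InnerProductSpace ℝ H]
    [CompleteSpace H]
    (C : Set H) (hCne : C.Nonempty) (hCcl : IsClosed C) (hCcv : Convex ℝ C)
    (P : H → H) (hPmem : ∀ u : H, P u ∈ C)
    (hPchar : ∀ u : H, ∀ c ∈ C, ⟪u - P u, c - P u⟫ ≤ 0)
    (F : H → H) (hmono : ∀ u v : H, 0 ≤ ⟪F u - F v, u - v⟫)
    (L : ℝ) (hL : 0 < L) (hLip : ∀ u v : H, ‖F u - F v‖ ≤ L * ‖u - v‖)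
    (ν γ : ℝ) (hν : ν ∈ Set.Ioo (0 : ℝ) 1) (hγ : γ ∈ Set.Ioo (0 : ℝ) 2)
    (w xstar : H) (hstar : xstar ∈ C ∧ ∀ z ∈ C, 0 ≤ ⟪F xstar, z - xstar⟫)
    (β : ℝ) (hβ : 0 < β) (y : H) (hy : y = P (w - β • F w))
    (hstep : β * ‖F w - F y‖ ≤ ν * ‖w - y‖)
    (d : H) (hd : d = (w - y) - β • (F w - F y)) (hdne : d ≠ 0)
    (ρ : ℝ) (hρ : ρ = ⟪w - y, d⟫ / ‖d‖ ^ 2)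
    (xplus : H) (hxplus : xplus = P (w - (γ * ρ * β) • F y)) :
    ‖xplus - xstar‖ ^ 2 ≤ ‖w - xstar‖ ^ 2 - γ * (2 - γ) * ρ ^ 2 * ‖d‖ ^ 2 := by
  have hproj (u : H) : IsProjOn C u (P u) := ⟨hPmem u, hPchar u⟩
  have hminty := IsVISolution.isMintySolution (fun u _ v _ ↦ hmono u v) ⟨hstar.1, hstar.2⟩
  exact stmt_19_general hminty hβ.le (hy ▸ hproj _)
    (hstep.trans (mul_le_of_le_one_left (norm_nonneg _) hν.2.le)) hd (norm_ne_zero_iff.mpr hdne)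
    hρ hγ.1.le (hxplus ▸ hproj _)
end
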